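/- If a connected graph G of the tetrahedral model with even bubble number b decomposes along a color-0 2-edge-cut into two parts G_L and G_R each with an odd number of bubbles, and each part is face-maximizing for its bubble number, then F(G) = (3/2)b + 2 < (3/2)b + 3; hence G does not maximize the number of faces among graphs with b bubbles. -/

import Mathlib

/-!  A combinatorial model of the Feynman graphs of the rank-3 tetrahedral
(`O(N)^3`) tensor model.

A graph consists of a finite set `B` of bubbles (copies of the tetrahedron
`K_4`); each bubble has four vertices, so the vertex set is `B × Fin 4`.
Inside every bubble the edges of colors `1,2,3` are given once and for all by
the three fixed-point-free involutions of `Fin 4` (the proper 3-edge-coloring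
of `K_4`).  The color-0 propagator edges, one per vertex, are encoded by a
fixed-point-free involution `pairing` of the vertex set. -/

open Equiv

/-- The color-`c` (for `c ∈ {1,2,3}`, here `c : Fin 3`) perfect matching on the
four vertices of a tetrahedral bubble. -/
def bubblePerm : Fin 3 → Equiv.Perm (Fin 4) :=
  ![Equiv.swap 0 1 * Equiv.swap 2 3,
    Equiv.swap 0 2 * Equiv.swap 1 3,
    Equiv.swap 0 3 * Equiv.swap 1 2]

/-- A Feynman graph of the tetrahedral tensor model: a finite set of `K_4`
bubbles together with a fixed-point-free involution of the vertex set
describing the color-0 edges. -/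
structure TGraph where
  B : Type
  [fintypeB : Fintype B]
  [decB : DecidableEq B]
  pairing : Equiv.Perm (B × Fin 4)
  invol : ∀ v, pairing (pairing v) = v
  fixfree : ∀ v, pairing v ≠ v

attribute [instance] TGraph.fintypeB TGraph.decB

namespace TGraph

/-- The vertex set of a graph. -/
abbrev V (G : TGraph) : Type := G.B × Fin 4

/-- The permutation of the vertices given by the color-`c` edges inside the
bubbles. -/
def colPerm (G : TGraph) (c : Fin 3) : Equiv.Perm G.V :=
  (Equiv.refl G.B).prodCongr (bubblePerm c)

/-- The number of bubbles of a graph. -/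
def b (G : TGraph) : ℕ := Fintype.card G.B

/-- The subgroup of permutations of the vertices generated by the color-0
pairing and the color-`c` matching: its orbits are exactly the faces of
color `c` (cycles alternating colors `0` and `c`). -/
def faceGroup (G : TGraph) (c : Fin 3) : Subgroup (Equiv.Perm G.V) :=
  Subgroup.closure {G.pairing, G.colPerm c}

/-- Two vertices lie on the same face of color `c`. -/
def sameFace (G : TGraph) (c : Fin 3) (u v : G.V) : Prop :=
  u ∈ MulAction.orbit (G.faceGroup c) v

/-- The number of faces of color `c` of the graph. -/
noncomputable def numFaces (G : TGraph) (c : Fin 3) : ℕ :=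
  Nat.card (MulAction.orbitRel.Quotient (G.faceGroup c) G.V)

/-- The total number of faces of the graph. -/
noncomputable def F (G : TGraph) : ℕ := ∑ c : Fin 3, G.numFaces c

/-- The length of the face of color `c` through the vertex `v` (a face of
length `n` consists of `n` color-0 edges and `n` color-`c` edges, hence `2n`
vertices). -/
noncomputable def faceLength (G : TGraph) (c : Fin 3) (v : G.V) : ℕ :=
  Nat.card (MulAction.orbit (G.faceGroup c) v) / 2

/-- The subgroup generated by all edges of the graph. -/
def fullGroup (G : TGraph) : Subgroup (Equiv.Perm G.V) :=
  Subgroup.closure ({G.pairing} ∪ Set.range G.colPerm)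

/-- A graph is connected if any vertex can be reached from any other one along
its edges. -/
def Connected (G : TGraph) : Prop :=
  ∀ u v : G.V, u ∈ MulAction.orbit G.fullGroup v

/-- One step along an edge of the graph avoiding the color-0 edges whose
endpoints belong to `S`. -/
def stepAvoiding (G : TGraph) (S : Set G.V) (u v : G.V) : Prop :=
  (∃ c, v = G.colPerm c u) ∨ (v = G.pairing u ∧ u ∉ S ∧ v ∉ S)

/-- Reachability in the graph with the color-0 edges meeting `S` removed. -/
def reachAvoiding (G : TGraph) (S : Set G.V) : G.V → G.V → Prop :=
  Relation.ReflTransGen (G.stepAvoiding S)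

/-- The pair of color-0 edges through the vertices `u` and `w` disconnects the
graph when removed.  Together with the requirement that the two edges be
distinct, this is the notion of a 2-edge-cut of color-0 edges. -/
def CutDisconnects (G : TGraph) (u w : G.V) : Prop :=
  ¬ ∀ x y : G.V, G.reachAvoiding {u, G.pairing u, w, G.pairing w} x y

/-- Two vertices are connected by a 2-point function if they are joined by a
color-0 edge, or if their two (distinct) color-0 edges form a 2-edge-cut. -/
def TwoPoint (G : TGraph) (x y : G.V) : Prop :=
  G.pairing x = y ∨ (y ≠ x ∧ y ≠ G.pairing x ∧ G.CutDisconnects x y)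

/-- The flip of the two color-0 edges `{u, pairing u}` and `{w, pairing w}`
(assumed distinct) which reconnects `u` with `w` (and `pairing u` with
`pairing w`): the pairing is conjugated by the transposition exchanging
`pairing u` and `w`.  The other flip of this pair of edges is
`G.flip u (G.pairing w)`. -/
def flip (G : TGraph) (u w : G.V) : TGraph where
  B := G.B
  pairing := Equiv.swap (G.pairing u) w * G.pairing * Equiv.swap (G.pairing u) w
  invol := by
    intro v
    simp only [Equiv.Perm.mul_apply, Equiv.swap_apply_self, G.invol]
  fixfree := by
    intro v h
    simp only [Equiv.Perm.mul_apply] at h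
    have h' : G.pairing (Equiv.swap (G.pairing u) w v) = Equiv.swap (G.pairing u) w v := by
      have := congrArg (Equiv.swap (G.pairing u) w) h
      simpa using this
    exact G.fixfree _ h'

/-- The face of color `c` through the color-0 edge `{v, pairing v}` has
length 2 (it consists of this edge, a color-`c` edge, a second color-0 edge
and a second color-`c` edge closing the cycle). -/
def FaceLen2 (G : TGraph) (c : Fin 3) (v : G.V) : Prop :=
  G.pairing v ≠ G.colPerm c v ∧
    G.pairing (G.colPerm c (G.pairing v)) = G.colPerm c v

/-- A proper face of length 2 of color `c` through `v`: a face of length 2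
whose two color-0 edges connect two distinct bubbles. -/
def ProperFace2 (G : TGraph) (c : Fin 3) (v : G.V) : Prop :=
  G.FaceLen2 c v ∧ (G.pairing v).1 ≠ v.1

/-- A graph maximizes the number of faces if it is connected and no connected
graph with the same number of bubbles has more faces. -/
def MaximizesFaces (G : TGraph) : Prop :=
  G.Connected ∧ ∀ H : TGraph, H.Connected → H.b = G.b → H.F ≤ G.F

/-- Isomorphisms of graphs: bijections of the vertex sets commuting with the
color-0 pairing and with the colored matchings inside the bubbles. -/
structure Iso (G H : TGraph) where
  toEquiv : G.V ≃ H.V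
  map_pairing : ∀ v, toEquiv (G.pairing v) = H.pairing (toEquiv v)
  map_col : ∀ c v, toEquiv (G.colPerm c v) = H.colPerm c (toEquiv v)

/-- Two graphs are isomorphic. -/
def IsIso (G H : TGraph) : Prop := Nonempty (Iso G H)

end TGraph

open TGraph

/-- The leading-order two-bubble graph `G_2`: two tetrahedral bubbles with
corresponding vertices joined by four color-0 edges, so that all six faces
have length 2. -/
def G2 : TGraph where
  B := Fin 2
  pairing := (Equiv.swap (0 : Fin 2) 1).prodCongr (Equiv.refl (Fin 4))
  invol := by
    rintro ⟨i, k⟩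
    simp [Equiv.prodCongr_apply, Equiv.swap_apply_self]
  fixfree := by
    rintro ⟨i, k⟩ h
    have hi : Equiv.swap (0 : Fin 2) 1 i = i := congrArg Prod.fst h
    fin_cases i <;> simp_all

/-- The double tadpole `G_1^{(c)}`: one tetrahedral bubble whose two color-0
edges each join two vertices already adjacent by an edge of color `c`. -/
def G1 (c : Fin 3) : TGraph where
  B := Fin 1
  pairing := (Equiv.refl (Fin 1)).prodCongr (bubblePerm c)
  invol := by
    rintro ⟨i, k⟩
    have hk : ∀ j : Fin 4, bubblePerm c (bubblePerm c j) = j := by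
      fin_cases c <;> decide
    simp [Equiv.prodCongr_apply, hk]
  fixfree := by
    rintro ⟨i, k⟩ h
    have hk : bubblePerm c k = k := congrArg Prod.snd h
    have hne : ∀ j : Fin 4, bubblePerm c j ≠ j := by
      fin_cases c <;> decide
    exact hne k hk

namespace TGraph

variable (H K : TGraph)

/-- The image of a vertex of `H` in the glued graph. -/
def inlV (x : H.V) : (H.B ⊕ K.B) × Fin 4 := (Sum.inl x.1, x.2)

/-- The image of a vertex of `K` in the glued graph. -/
def inrV (y : K.V) : (H.B ⊕ K.B) × Fin 4 := (Sum.inr y.1, y.2)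

/-- The underlying function of the pairing of the graph obtained by gluing `H`
and `K` along the color-0 edges `{p, H.pairing p}` and `{q, K.pairing q}`:
these two edges are cut and the half-edges are reglued as `p — q` and
`H.pairing p — K.pairing q`.  The new pair of edges is a 2-edge-cut of the
resulting graph when `H` and `K` are connected. -/
def glueFun (p : H.V) (q : K.V) : (H.B ⊕ K.B) × Fin 4 → (H.B ⊕ K.B) × Fin 4 :=
  fun z =>
    match z with
    | (Sum.inl u, k) =>
        if (u, k) = p then inrV H K q
        else if (u, k) = H.pairing p then inrV H K (K.pairing q)
        else inlV H K (H.pairing (u, k))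
    | (Sum.inr u, k) =>
        if (u, k) = q then inlV H K p
        else if (u, k) = K.pairing q then inlV H K (H.pairing p)
        else inrV H K (K.pairing (u, k))

theorem glueFun_inlV (p : H.V) (q : K.V) (x : H.V) :
    glueFun H K p q (inlV H K x) =
      if x = p then inrV H K q
      else if x = H.pairing p then inrV H K (K.pairing q)
      else inlV H K (H.pairing x) := by
  cases x
  rfl

theorem glueFun_inrV (p : H.V) (q : K.V) (y : K.V) :
    glueFun H K p q (inrV H K y) =
      if y = q then inlV H K p
      else if y = K.pairing q then inlV H K (H.pairing p)
      else inrV H K (K.pairing y) := by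
  cases y
  rfl

theorem inlV_injective : Function.Injective (inlV H K) := by
  rintro ⟨u, k⟩ ⟨u', k'⟩ h
  have h1 : (Sum.inl u : H.B ⊕ K.B) = Sum.inl u' := congrArg Prod.fst h
  have h2 : k = k' := congrArg Prod.snd h
  exact Prod.ext (Sum.inl_injective h1) h2

theorem inrV_injective : Function.Injective (inrV H K) := by
  rintro ⟨u, k⟩ ⟨u', k'⟩ h
  have h1 : (Sum.inr u : H.B ⊕ K.B) = Sum.inr u' := congrArg Prod.fst h
  have h2 : k = k' := congrArg Prod.snd h
  exact Prod.ext (Sum.inr_injective h1) h2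

theorem inlV_ne_inrV (x : H.V) (y : K.V) : inlV H K x ≠ inrV H K y := by
  intro h
  exact Sum.inl_ne_inr (congrArg Prod.fst h)

theorem glueFun_invol_inl (p : H.V) (q : K.V) (x : H.V) :
    glueFun H K p q (glueFun H K p q (inlV H K x)) = inlV H K x := by
  rw [glueFun_inlV]
  by_cases h1 : x = p
  · rw [if_pos h1, glueFun_inrV, if_pos rfl, h1]
  · by_cases h2 : x = H.pairing p
    · rw [if_neg h1, if_pos h2, glueFun_inrV,
        if_neg (fun h => K.fixfree q h), if_pos rfl, h2]
    · have hne1 : H.pairing x ≠ p := by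
        intro h; apply h2
        have := congrArg H.pairing h
        rw [H.invol] at this; exact this
      have hne2 : H.pairing x ≠ H.pairing p := fun h => h1 (H.pairing.injective h)
      rw [if_neg h1, if_neg h2, glueFun_inlV, if_neg hne1, if_neg hne2, H.invol]

theorem glueFun_invol_inr (p : H.V) (q : K.V) (y : K.V) :
    glueFun H K p q (glueFun H K p q (inrV H K y)) = inrV H K y := by
  rw [glueFun_inrV]
  by_cases h1 : y = q
  · rw [if_pos h1, glueFun_inlV, if_pos rfl, h1]
  · by_cases h2 : y = K.pairing q
    · rw [if_neg h1, if_pos h2, glueFun_inlV,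
        if_neg (fun h => H.fixfree p h), if_pos rfl, h2]
    · have hne1 : K.pairing y ≠ q := by
        intro h; apply h2
        have := congrArg K.pairing h
        rw [K.invol] at this; exact this
      have hne2 : K.pairing y ≠ K.pairing q := fun h => h1 (K.pairing.injective h)
      rw [if_neg h1, if_neg h2, glueFun_inrV, if_neg hne1, if_neg hne2, K.invol]

theorem glueFun_involutive (p : H.V) (q : K.V) :
    Function.Involutive (glueFun H K p q) := by
  rintro ⟨(u | u), k⟩
  · exact glueFun_invol_inl H K p q (u, k)
  · exact glueFun_invol_inr H K p q (u, k)

theorem glueFun_fixfree (p : H.V) (q : K.V) :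
    ∀ z, glueFun H K p q z ≠ z := by
  have hl : ∀ x : H.V, glueFun H K p q (inlV H K x) ≠ inlV H K x := by
    intro x h
    rw [glueFun_inlV] at h
    by_cases h1 : x = p
    · rw [if_pos h1] at h
      exact inlV_ne_inrV H K x q h.symm
    · by_cases h2 : x = H.pairing p
      · rw [if_neg h1, if_pos h2] at h
        exact inlV_ne_inrV H K x (K.pairing q) h.symm
      · rw [if_neg h1, if_neg h2] at h
        exact H.fixfree x (inlV_injective H K h)
  have hr : ∀ y : K.V, glueFun H K p q (inrV H K y) ≠ inrV H K y := by
    intro y h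
    rw [glueFun_inrV] at h
    by_cases h1 : y = q
    · rw [if_pos h1] at h
      exact inlV_ne_inrV H K p y h
    · by_cases h2 : y = K.pairing q
      · rw [if_neg h1, if_pos h2] at h
        exact inlV_ne_inrV H K (H.pairing p) y h
      · rw [if_neg h1, if_neg h2] at h
        exact K.fixfree y (inrV_injective H K h)
  rintro ⟨(u | u), k⟩
  · exact hl (u, k)
  · exact hr (u, k)

/-- Gluing two graphs along a pair of color-0 edges.  When `H` and `K` are
connected, the two new color-0 edges form a 2-edge-cut of the glued graph, and
conversely every connected graph with a color-0 2-edge-cut arises this way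
from the two closed graphs obtained by cutting the two edges and closing each
side. -/
def glue (p : H.V) (q : K.V) : TGraph where
  B := H.B ⊕ K.B
  pairing := (glueFun_involutive H K p q).toPerm
  invol := fun v => glueFun_involutive H K p q v
  fixfree := fun v => glueFun_fixfree H K p q v

/-- Insertion of a melonic dipole (the 2-point graph obtained by cutting one
color-0 edge of `G_2`) on the color-0 edge `{v, G.pairing v}` of `G`. -/
def insertDipole (G : TGraph) (v : G.V) : TGraph :=
  glue G G2 v ((0 : Fin 2), (0 : Fin 4))

end TGraph

open TGraph

/-- Melonic graphs (up to isomorphism): `G_2` is melonic, and inserting a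
melonic dipole on any color-0 edge of a melonic graph yields a melonic
graph. -/
inductive IsMelonic : TGraph → Prop
  | base {G : TGraph} (h : IsIso G G2) : IsMelonic G
  | insert {G : TGraph} (hG : IsMelonic G) (v : G.V) {H : TGraph}
      (h : IsIso H (G.insertDipole v)) : IsMelonic H

/-- Double tadpoles decorated with melonic 2-point functions (up to
isomorphism): these are exactly the graphs obtained from one of the double
tadpoles `G_1^{(c)}` by repeatedly inserting melonic dipoles on color-0 edges,
i.e. double tadpoles whose two color-0 edges are replaced by melonic 2-point
functions. -/
inductive IsDecoratedTadpole : TGraph → Prop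
  | base {G : TGraph} (c : Fin 3) (h : IsIso G (G1 c)) : IsDecoratedTadpole G
  | insert {G : TGraph} (hG : IsDecoratedTadpole G) (v : G.V) {H : TGraph}
      (h : IsIso H (G.insertDipole v)) : IsDecoratedTadpole H

open Module

section InvariantFunctions

variable {V : Type}

/-- The `ZMod 2`-valued functions which are invariant under all permutations of `S`. -/
def invariantFunctions (S : Set (Perm V)) : Submodule (ZMod 2) (V → ZMod 2) where
  carrier := {f | ∀ σ ∈ S, ∀ v, f (σ v) = f v}
  add_mem' hf hg σ hσ v := by simp [hf σ hσ v, hg σ hσ v]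
  zero_mem' _ _ _ := rfl
  smul_mem' r f hf σ hσ v := by simp [hf σ hσ v]

theorem mem_invariantFunctions {S : Set (Perm V)} {f : V → ZMod 2} :
    f ∈ invariantFunctions S ↔ ∀ σ ∈ S, ∀ v, f (σ v) = f v := Iff.rfl

theorem invariantFunctions_pair (σ τ : Perm V) :
    invariantFunctions {σ, τ} = invariantFunctions {σ} ⊓ invariantFunctions {τ} := by
  ext f
  simp [mem_invariantFunctions]

theorem apply_eq_of_mem_closure {S : Set (Perm V)} {α : Type*} {f : V → α}
    (hf : ∀ σ ∈ S, ∀ v, f (σ v) = f v) {σ : Perm V} (hσ : σ ∈ Subgroup.closure S) :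
    ∀ v, f (σ v) = f v := by
  induction hσ using Subgroup.closure_induction with
  | mem σ h => exact hf σ h
  | one => intro v; rfl
  | mul σ τ _ _ h1 h2 => intro v; rw [Perm.mul_apply, h1, h2]
  | inv σ _ h => intro v; rw [← h (σ⁻¹ v)]; simp

theorem apply_eq_of_mem_orbit {S : Set (Perm V)} {α : Type*} {f : V → α}
    (hf : ∀ σ ∈ S, ∀ v, f (σ v) = f v) {u v : V}
    (h : u ∈ MulAction.orbit (Subgroup.closure S) v) : f u = f v := by
  obtain ⟨⟨σ, hσ⟩, rfl⟩ := h
  exact apply_eq_of_mem_closure hf hσ v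

/-- The number of orbits is the dimension of the space of invariant functions. -/
theorem finrank_invariantFunctions [Finite V] (S : Set (Perm V)) :
    finrank (ZMod 2) (invariantFunctions S) =
      Nat.card (MulAction.orbitRel.Quotient (Subgroup.closure S) V) := by
  classical
  let π : V → MulAction.orbitRel.Quotient (Subgroup.closure S) V := Quotient.mk _
  have hπ : Function.Surjective π := Quotient.mk_surjective
  have hfin : Finite (MulAction.orbitRel.Quotient (Subgroup.closure S) V) :=
    Finite.of_surjective π hπ
  have := Fintype.ofFinite (MulAction.orbitRel.Quotient (Subgroup.closure S) V)
  have hrange : LinearMap.range (LinearMap.funLeft (ZMod 2) (ZMod 2) π) =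
      invariantFunctions S := by
    ext f
    constructor
    · rintro ⟨g, rfl⟩ σ hσ v
      refine congrArg g (Quotient.sound ?_)
      exact ⟨⟨σ, Subgroup.subset_closure hσ⟩, rfl⟩
    · intro hf
      refine ⟨Quotient.lift f fun u v h => apply_eq_of_mem_orbit hf h, ?_⟩
      rfl
  rw [← hrange, LinearMap.finrank_range_of_inj
    (LinearMap.funLeft_injective_of_surjective _ _ _ hπ), Module.finrank_fintype_fun_eq_card,
    Nat.card_eq_fintype_card]

theorem two_le_card_orbits [Finite V] {S : Set (Perm V)} {f : V → ZMod 2}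
    (hf : f ∈ invariantFunctions S) {u v : V} (huv : f u ≠ f v) :
    2 ≤ Nat.card (MulAction.orbitRel.Quotient (Subgroup.closure S) V) := by
  have hfin : Finite (MulAction.orbitRel.Quotient (Subgroup.closure S) V) :=
    Finite.of_surjective (Quotient.mk _) Quotient.mk_surjective
  have : Nontrivial (MulAction.orbitRel.Quotient (Subgroup.closure S) V) := by
    refine ⟨Quotient.mk _ u, Quotient.mk _ v, fun h => huv ?_⟩
    exact apply_eq_of_mem_orbit hf (Quotient.exact h)
  exact Finite.one_lt_card

theorem one_le_card_orbits [Finite V] [Nonempty V] (S : Set (Perm V)) :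
    1 ≤ Nat.card (MulAction.orbitRel.Quotient (Subgroup.closure S) V) := by
  have hfin : Finite (MulAction.orbitRel.Quotient (Subgroup.closure S) V) :=
    Finite.of_surjective (Quotient.mk _) Quotient.mk_surjective
  have : Nonempty (MulAction.orbitRel.Quotient (Subgroup.closure S) V) :=
    ‹Nonempty V›.map (Quotient.mk _)
  exact Nat.card_pos

/-- Functions invariant under the same fixed-point-free involution are orthogonal modulo `2`. -/
theorem dotProduct_eq_zero_of_invariant [Fintype V] {σ : Perm V}
    (hinv : ∀ v, σ (σ v) = v) (hfix : ∀ v, σ v ≠ v) {f g : V → ZMod 2}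
    (hf : f ∈ invariantFunctions {σ}) (hg : g ∈ invariantFunctions {σ}) :
    f ⬝ᵥ g = 0 := by
  refine Finset.sum_involution (fun v _ => σ v) ?_ (fun v _ _ => hfix v)
    (fun _ _ => Finset.mem_univ _) (fun v _ => hinv v)
  intro v _
  rw [hf σ rfl v, hg σ rfl v]
  exact CharTwo.add_self_eq_zero _

theorem card_le_two_mul_finrank_invariant [Fintype V] {σ : Perm V}
    (hinv : ∀ v, σ (σ v) = v) :
    Fintype.card V ≤ 2 * finrank (ZMod 2) (invariantFunctions {σ}) := by
  let T : (V → ZMod 2) →ₗ[ZMod 2] (V → ZMod 2) :=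
    LinearMap.id + LinearMap.funLeft (ZMod 2) (ZMod 2) σ
  have hker : LinearMap.ker T ≤ invariantFunctions {σ} := by
    rintro f hf _ rfl v
    have := congrFun (LinearMap.mem_ker.1 hf) v
    exact (CharTwo.add_eq_zero.1 this).symm
  have hrange : LinearMap.range T ≤ invariantFunctions {σ} := by
    rintro _ ⟨f, rfl⟩ _ rfl v
    simp [T, LinearMap.funLeft, hinv, add_comm]
  have h := T.finrank_range_add_finrank_ker
  rw [Module.finrank_fintype_fun_eq_card] at h
  have h1 := Submodule.finrank_mono hker
  have h2 := Submodule.finrank_mono hrange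
  omega

/-- Two subspaces which are orthogonal for the dot product have complementary dimensions at
most. -/
theorem finrank_add_finrank_le_of_dotProduct [Fintype V] {P Q : Submodule (ZMod 2) (V → ZMod 2)}
    (h : ∀ f ∈ P, ∀ g ∈ Q, f ⬝ᵥ g = 0) :
    finrank (ZMod 2) P + finrank (ZMod 2) Q ≤ Fintype.card V := by
  classical
  let φ : (V → ZMod 2) →ₗ[ZMod 2] Dual (ZMod 2) (V → ZMod 2) := dotProductBilin (ZMod 2) (ZMod 2)
  have hφ : Function.Injective φ := by
    intro f g hfg
    exact dotProduct_eq f g fun u => LinearMap.congr_fun hfg u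
  have hle : P.map φ ≤ Q.dualAnnihilator := by
    rintro _ ⟨f, hf, rfl⟩
    rw [Submodule.mem_dualAnnihilator]
    exact fun g hg => h f hf g hg
  have h1 := Submodule.finrank_mono hle
  rw [← (Submodule.equivMapOfInjective φ hφ P).finrank_eq] at h1
  have h2 := Subspace.finrank_add_finrank_dualAnnihilator_eq Q
  rw [Module.finrank_fintype_fun_eq_card] at h2
  omega

/-- The Euler characteristic of a connected closed surface, presented by a graph with a proper
3-edge-coloring, is at most `2`. -/
theorem euler_inequality [Fintype V] {a x y : Perm V}
    (ha : ∀ v, a (a v) = v) (ha' : ∀ v, a v ≠ v)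
    (hx : ∀ v, x (x v) = v) (hx' : ∀ v, x v ≠ v)
    (hy : ∀ v, y (y v) = v) (hy' : ∀ v, y v ≠ v)
    (hconn : ∀ f ∈ invariantFunctions {a} ⊓ invariantFunctions {x} ⊓ invariantFunctions {y},
      ∀ u v, f u = f v) :
    2 * (finrank (ZMod 2) (invariantFunctions {a, x}) +
      finrank (ZMod 2) (invariantFunctions {a, y}) +
      finrank (ZMod 2) (invariantFunctions {x, y})) ≤ Fintype.card V + 4 := by
  rw [invariantFunctions_pair a x, invariantFunctions_pair a y, invariantFunctions_pair x y]
  set A := invariantFunctions {a}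
  set X := invariantFunctions {x}
  set Y := invariantFunctions {y}
  have ht : finrank (ZMod 2) (A ⊓ X ⊓ Y : Submodule (ZMod 2) (V → ZMod 2)) ≤ 1 := by
    refine finrank_le_one ⟨fun _ => 1, ⟨fun _ _ _ => rfl, fun _ _ _ => rfl⟩, fun _ _ _ => rfl⟩ ?_
    rintro ⟨f, hf⟩
    rcases isEmpty_or_nonempty V with hV | ⟨⟨v⟩⟩
    · exact ⟨0, Subtype.ext (Subsingleton.elim _ _)⟩
    · exact ⟨f v, Subtype.ext (funext fun u => by simp [hconn f hf u v])⟩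
  have hA : Fintype.card V ≤ 2 * finrank (ZMod 2) A := card_le_two_mul_finrank_invariant ha
  have hsum1 := Submodule.finrank_sup_add_finrank_inf_eq (A ⊓ X) (A ⊓ Y)
  have hsum2 := Submodule.finrank_sup_add_finrank_inf_eq (X ⊓ Y) A
  have e1 : (A ⊓ X) ⊓ (A ⊓ Y) = A ⊓ X ⊓ Y := by
    rw [inf_inf_inf_comm, inf_idem, inf_assoc]
  have e2 : (X ⊓ Y) ⊓ A = A ⊓ X ⊓ Y := by rw [inf_comm, inf_assoc]
  rw [e1] at hsum1
  rw [e2] at hsum2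
  have horth := finrank_add_finrank_le_of_dotProduct (P := (A ⊓ X) ⊔ (A ⊓ Y))
    (Q := (X ⊓ Y) ⊔ A) (by
      intro f hf g hg
      obtain ⟨f1, ⟨hf1A, hf1X⟩, f2, ⟨hf2A, hf2Y⟩, rfl⟩ := Submodule.mem_sup.1 hf
      obtain ⟨g1, ⟨hg1X, hg1Y⟩, g2, hg2, rfl⟩ := Submodule.mem_sup.1 hg
      rw [add_dotProduct, dotProduct_add, dotProduct_add,
        dotProduct_eq_zero_of_invariant hx hx' hf1X hg1X,
        dotProduct_eq_zero_of_invariant ha ha' hf1A hg2,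
        dotProduct_eq_zero_of_invariant hy hy' hf2Y hg1Y,
        dotProduct_eq_zero_of_invariant ha ha' hf2A hg2]
      simp)
  omega

/-- A finite set preserved by a fixed-point-free involution has even cardinality. -/
theorem even_card_of_involution {s : Finset V} (g : V → V)
    (hg : ∀ v ∈ s, g v ∈ s) (hinv : ∀ v, g (g v) = v) (hfix : ∀ v, g v ≠ v) : Even s.card := by
  have h : ∑ _v ∈ s, (1 : ZMod 2) = 0 :=
    Finset.sum_involution (fun v _ => g v) (fun _ _ => by decide) (fun v _ _ => hfix v)
      (fun v hv => hg v hv) (fun v _ => hinv v)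
  rw [Finset.sum_const, nsmul_one] at h
  exact (ZMod.natCast_eq_zero_iff_even).1 h

/-- An edge of a perfect matching `a` is never a bridge in a graph properly edge-colored by `a`
and another perfect matching `x`. -/
theorem apply_eq_of_invariant_off_edge [Fintype V] {a x : Perm V}
    (ha : ∀ v, a (a v) = v) (ha' : ∀ v, a v ≠ v)
    (hx : ∀ v, x (x v) = v) (hx' : ∀ v, x v ≠ v) {f : V → ZMod 2} {p : V}
    (hfx : ∀ v, f (x v) = f v) (hfa : ∀ v, v ≠ p → v ≠ a p → f (a v) = f v) :
    ∀ v, f (a v) = f v := by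
  classical
  have hp : f (a p) = f p := by
    by_contra hne
    have h1 : Even (Finset.univ.filter fun v => f v = f p).card :=
      even_card_of_involution x (by simp [hfx]) hx hx'
    have h2 : Even ((Finset.univ.filter fun v => f v = f p).erase p).card := by
      refine even_card_of_involution a ?_ ha ha'
      intro v hv
      simp only [Finset.mem_erase, Finset.mem_filter, Finset.mem_univ, true_and] at hv ⊢
      have hvap : v ≠ a p := by
        rintro rfl
        exact hne hv.2
      refine ⟨fun h => hvap ?_, (hfa v hv.1 hvap).trans hv.2⟩
      rw [← h, ha]
    have hmem : p ∈ Finset.univ.filter fun v => f v = f p := by simp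
    have h3 := Finset.card_erase_add_one hmem
    rw [← h3] at h1
    exact (Nat.even_add_one.1 h1) h2
  intro v
  by_cases h1 : v = p
  · rw [h1, hp]
  by_cases h2 : v = a p
  · rw [h2, ha, hp]
  exact hfa v h1 h2

end InvariantFunctions

namespace TGraph

theorem bubblePerm_invol (c : Fin 3) (k : Fin 4) : bubblePerm c (bubblePerm c k) = k := by
  revert c k; decide

theorem bubblePerm_fixfree (c : Fin 3) (k : Fin 4) : bubblePerm c k ≠ k := by
  revert c k; decide

theorem colPerm_apply (G : TGraph) (c : Fin 3) (v : G.V) :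
    G.colPerm c v = (v.1, bubblePerm c v.2) := rfl

theorem colPerm_invol (G : TGraph) (c : Fin 3) (v : G.V) : G.colPerm c (G.colPerm c v) = v := by
  simp [colPerm_apply, bubblePerm_invol]

theorem colPerm_fixfree (G : TGraph) (c : Fin 3) (v : G.V) : G.colPerm c v ≠ v :=
  fun h => bubblePerm_fixfree c v.2 (congrArg Prod.snd h)

theorem numFaces_eq_finrank (G : TGraph) (c : Fin 3) :
    G.numFaces c = finrank (ZMod 2) (invariantFunctions {G.pairing, G.colPerm c}) :=
  (finrank_invariantFunctions _).symm

/-- Two colors suffice to connect a bubble. -/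
theorem apply_eq_of_two_colors (G : TGraph) {i j : Fin 3} (hij : i ≠ j) {f : G.V → ZMod 2}
    (hi : ∀ v, f (G.colPerm i v) = f v) (hj : ∀ v, f (G.colPerm j v) = f v) (v : G.V) :
    f v = f (v.1, 0) := by
  obtain ⟨u, k⟩ := v
  have hcomb : ∀ (i j : Fin 3), i ≠ j → ∀ k : Fin 4, k = 0 ∨ k = bubblePerm i 0 ∨
      k = bubblePerm j 0 ∨ k = bubblePerm i (bubblePerm j 0) := by decide
  rcases hcomb i j hij k with h | h | h | h
  · rw [h]
  · rw [h]; exact hi (u, 0)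
  · rw [h]; exact hj (u, 0)
  · rw [h]; exact (hi (u, bubblePerm j 0)).trans (hj (u, 0))

theorem apply_colPerm_of_two_colors (G : TGraph) {i j : Fin 3} (hij : i ≠ j) {f : G.V → ZMod 2}
    (hi : ∀ v, f (G.colPerm i v) = f v) (hj : ∀ v, f (G.colPerm j v) = f v) (c : Fin 3)
    (v : G.V) : f (G.colPerm c v) = f v := by
  rw [apply_eq_of_two_colors G hij hi hj (G.colPerm c v), apply_eq_of_two_colors G hij hi hj v]
  rfl

theorem connected_iff (G : TGraph) :
    G.Connected ↔ ∀ f : G.V → ZMod 2, (∀ v, f (G.pairing v) = f v) →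
      (∀ c v, f (G.colPerm c v) = f v) → ∀ u v, f u = f v := by
  classical
  constructor
  · intro h f hp hc u v
    refine apply_eq_of_mem_orbit ?_ (h u v)
    rintro σ (rfl | ⟨c, rfl⟩)
    · exact hp
    · exact hc c
  · intro h u v
    have hstep : ∀ σ ∈ G.fullGroup, ∀ w,
        (σ w ∈ MulAction.orbit G.fullGroup v ↔ w ∈ MulAction.orbit G.fullGroup v) :=
      fun σ hσ w => by
      rw [← MulAction.orbit_eq_iff, ← MulAction.orbit_eq_iff]
      exact Eq.congr_left (MulAction.orbit_smul (⟨σ, hσ⟩ : G.fullGroup) w)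
    have hf := h (fun w => if w ∈ MulAction.orbit G.fullGroup v then 1 else 0)
      (fun w => by
        simp only [hstep _ (Subgroup.subset_closure (Or.inl rfl)) w])
      (fun c w => by
        simp only [hstep _ (Subgroup.subset_closure (Or.inr ⟨c, rfl⟩)) w]) u v
    by_contra hu
    simp [hu, MulAction.mem_orbit_self] at hf

theorem card_V (G : TGraph) : Fintype.card G.V = 4 * G.b := by
  simp [V, b, mul_comm]

/-- The bubbles inject into the orbits of two colors of the bubble matchings. -/
theorem b_le_finrank (G : TGraph) (i j : Fin 3) :
    G.b ≤ finrank (ZMod 2) (invariantFunctions {G.colPerm i, G.colPerm j}) := by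
  have hinj := LinearMap.funLeft_injective_of_surjective (ZMod 2) (ZMod 2)
    (Prod.fst : G.V → G.B) Prod.fst_surjective
  have h := LinearMap.finrank_range_of_inj hinj
  rw [Module.finrank_fintype_fun_eq_card] at h
  rw [b, ← h]
  refine Submodule.finrank_mono ?_
  rintro _ ⟨g, rfl⟩ σ (rfl | rfl) v <;> rfl

/-- The Euler bound for the jacket obtained by forgetting one color. -/
theorem numFaces_add_numFaces_le {G : TGraph} (hG : G.Connected) {i j : Fin 3} (hij : i ≠ j) :
    G.numFaces i + G.numFaces j ≤ G.b + 2 := by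
  have h := euler_inequality (V := G.V) G.invol G.fixfree (G.colPerm_invol i) (G.colPerm_fixfree i)
    (G.colPerm_invol j) (G.colPerm_fixfree j) (by
      rintro f ⟨⟨hp, hi⟩, hj⟩
      exact (connected_iff G).1 hG f (hp _ rfl)
        (apply_colPerm_of_two_colors G hij (hi _ rfl) (hj _ rfl)))
  have hb := G.b_le_finrank i j
  rw [← numFaces_eq_finrank, ← numFaces_eq_finrank, card_V] at h
  omega

/-- The degree of a connected graph is nonnegative. -/
theorem two_mul_F_le {G : TGraph} (hG : G.Connected) : 2 * G.F ≤ 3 * G.b + 6 := by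
  have h01 := numFaces_add_numFaces_le hG (show (0 : Fin 3) ≠ 1 by decide)
  have h02 := numFaces_add_numFaces_le hG (show (0 : Fin 3) ≠ 2 by decide)
  have h12 := numFaces_add_numFaces_le hG (show (1 : Fin 3) ≠ 2 by decide)
  rw [F, Fin.sum_univ_three]
  omega

section Glue

variable (H K : TGraph) (p : H.V) (q : K.V)

theorem glue_pairing_inlV (x : H.V) : (glue H K p q).pairing (inlV H K x) =
    if x = p then inrV H K q
    else if x = H.pairing p then inrV H K (K.pairing q)
    else inlV H K (H.pairing x) := glueFun_inlV H K p q x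

theorem glue_pairing_inrV (y : K.V) : (glue H K p q).pairing (inrV H K y) =
    if y = q then inlV H K p
    else if y = K.pairing q then inlV H K (H.pairing p)
    else inrV H K (K.pairing y) := glueFun_inrV H K p q y

theorem glue_colPerm_inlV (c : Fin 3) (x : H.V) :
    (glue H K p q).colPerm c (inlV H K x) = inlV H K (H.colPerm c x) := rfl

theorem glue_colPerm_inrV (c : Fin 3) (y : K.V) :
    (glue H K p q).colPerm c (inrV H K y) = inrV H K (K.colPerm c y) := rfl

theorem glue_b : (glue H K p q).b = H.b + K.b :=
  Fintype.card_sum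

/-- A function on the glued graph invariant along one face color is a pair of such functions on
the two parts, which agree at the glued vertices. -/
theorem glue_invariant_iff (c : Fin 3) (f : (glue H K p q).V → ZMod 2) :
    ((∀ v, f ((glue H K p q).pairing v) = f v) ∧ ∀ v, f ((glue H K p q).colPerm c v) = f v) ↔
      ((∀ x, f (inlV H K (H.pairing x)) = f (inlV H K x)) ∧
        ∀ x, f (inlV H K (H.colPerm c x)) = f (inlV H K x)) ∧
      ((∀ y, f (inrV H K (K.pairing y)) = f (inrV H K y)) ∧
        ∀ y, f (inrV H K (K.colPerm c y)) = f (inrV H K y)) ∧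
      f (inlV H K p) = f (inrV H K q) := by
  constructor
  · rintro ⟨hp, hc⟩
    have hcH : ∀ x, f (inlV H K (H.colPerm c x)) = f (inlV H K x) := fun x => hc (inlV H K x)
    have hcK : ∀ y, f (inrV H K (K.colPerm c y)) = f (inrV H K y) := fun y => hc (inrV H K y)
    refine ⟨⟨?_, hcH⟩, ⟨?_, hcK⟩, ?_⟩
    · refine apply_eq_of_invariant_off_edge (f := fun x => f (inlV H K x)) (p := p) H.invol
        H.fixfree (H.colPerm_invol c) (H.colPerm_fixfree c) hcH fun x h1 h2 => ?_
      have := hp (inlV H K x)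
      rwa [glue_pairing_inlV, if_neg h1, if_neg h2] at this
    · refine apply_eq_of_invariant_off_edge (f := fun y => f (inrV H K y)) (p := q) K.invol
        K.fixfree (K.colPerm_invol c) (K.colPerm_fixfree c) hcK fun y h1 h2 => ?_
      have := hp (inrV H K y)
      rwa [glue_pairing_inrV, if_neg h1, if_neg h2] at this
    · have := hp (inlV H K p)
      rw [glue_pairing_inlV, if_pos rfl] at this
      exact this.symm
  · rintro ⟨⟨hpH, hcH⟩, ⟨hpK, hcK⟩, hpq⟩
    constructor
    · rintro ⟨u | u, k⟩
      · change f ((glue H K p q).pairing (inlV H K (u, k))) = f (inlV H K (u, k))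
        rw [glue_pairing_inlV]
        split_ifs with h1 h2
        · rw [h1, hpq]
        · rw [h2, hpK, hpH, hpq]
        · exact hpH _
      · change f ((glue H K p q).pairing (inrV H K (u, k))) = f (inrV H K (u, k))
        rw [glue_pairing_inrV]
        split_ifs with h1 h2
        · rw [h1, hpq]
        · rw [h2, hpK, hpH, hpq]
        · exact hpK _
    · rintro ⟨u | u, k⟩
      · exact hcH (u, k)
      · exact hcK (u, k)

theorem glue_connected (hH : H.Connected) (hK : K.Connected) : (glue H K p q).Connected := by
  rw [connected_iff] at hH hK ⊢
  intro f hp hc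
  have h := fun c => (glue_invariant_iff H K p q c f).1 ⟨hp, hc c⟩
  have hl := hH (fun x => f (inlV H K x)) (h 0).1.1 fun c => (h c).1.2
  have hr := hK (fun y => f (inrV H K y)) (h 0).2.1.1 fun c => (h c).2.1.2
  have hall : ∀ v, f v = f (inlV H K p) := by
    rintro ⟨u | u, k⟩
    · exact hl (u, k) p
    · exact (hr (u, k) q).trans (h 0).2.2.symm
  intro u v
  rw [hall u, hall v]

/-- Gluing merges exactly two faces of each color. -/
theorem glue_numFaces (c : Fin 3) :
    (glue H K p q).numFaces c + 1 = H.numFaces c + K.numFaces c := by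
  set A := invariantFunctions {H.pairing, H.colPerm c}
  set B := invariantFunctions {K.pairing, K.colPerm c}
  set C := invariantFunctions {(glue H K p q).pairing, (glue H K p q).colPerm c}
  let δ : (A × B) →ₗ[ZMod 2] ZMod 2 :=
    (LinearMap.proj p ∘ₗ A.subtype).coprod (-(LinearMap.proj q ∘ₗ B.subtype))
  have hδ : ∀ z, δ z = z.1.1 p - z.2.1 q := fun z => by simp [δ, sub_eq_add_neg]
  have hsurj : LinearMap.range δ = ⊤ := by
    refine LinearMap.range_eq_top.2 fun r => ⟨(⟨fun _ => r, fun _ _ _ => rfl⟩, 0), ?_⟩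
    simp [hδ]
  let T : (A × B) →ₗ[ZMod 2] ((glue H K p q).V → ZMod 2) :=
    { toFun := fun z v => Sum.elim (fun u => z.1.1 (u, v.2)) (fun u => z.2.1 (u, v.2)) v.1
      map_add' := by
        intro z w
        ext ⟨u | u, k⟩ <;> rfl
      map_smul' := by
        intro r z
        ext ⟨u | u, k⟩ <;> rfl }
  have hTl : ∀ z x, T z (inlV H K x) = z.1.1 x := fun _ _ => rfl
  have hTr : ∀ z y, T z (inrV H K y) = z.2.1 y := fun _ _ => rfl
  have hT : Function.Injective T := by
    intro z w h
    refine Prod.ext (Subtype.ext (funext fun x => ?_)) (Subtype.ext (funext fun y => ?_))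
    · rw [← hTl, h, hTl]
    · rw [← hTr, h, hTr]
  have hmap : (LinearMap.ker δ).map T = C := by
    ext f
    have hC : f ∈ C ↔ ((∀ v, f ((glue H K p q).pairing v) = f v) ∧
        ∀ v, f ((glue H K p q).colPerm c v) = f v) := by
      simp [C, mem_invariantFunctions]
    rw [hC, glue_invariant_iff]
    constructor
    · rintro ⟨z, hz, rfl⟩
      have hz' : z.1.1 p - z.2.1 q = 0 := (hδ z).symm.trans hz
      simp only [hTl, hTr]
      exact ⟨⟨z.1.2 _ (Or.inl rfl), z.1.2 _ (Or.inr rfl)⟩,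
        ⟨z.2.2 _ (Or.inl rfl), z.2.2 _ (Or.inr rfl)⟩, sub_eq_zero.1 hz'⟩
    · rintro ⟨⟨h1, h2⟩, ⟨h3, h4⟩, h5⟩
      refine ⟨(⟨fun x => f (inlV H K x), ?_⟩, ⟨fun y => f (inrV H K y), ?_⟩), ?_, ?_⟩
      · rintro σ (rfl | rfl)
        exacts [h1, h2]
      · rintro σ (rfl | rfl)
        exacts [h3, h4]
      · exact (hδ _).trans (sub_eq_zero.2 h5)
      · ext ⟨u | u, k⟩ <;> rfl
  have hrank := δ.finrank_range_add_finrank_ker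
  rw [hsurj, finrank_top, Module.finrank_self, Module.finrank_prod,
    (Submodule.equivMapOfInjective T hT _).finrank_eq, hmap] at hrank
  rw [numFaces_eq_finrank, numFaces_eq_finrank, numFaces_eq_finrank, ← hrank, add_comm]

theorem glue_F : (glue H K p q).F + 3 = H.F + K.F := by
  have h0 := glue_numFaces H K p q 0
  have h1 := glue_numFaces H K p q 1
  have h2 := glue_numFaces H K p q 2
  simp only [F, Fin.sum_univ_three]
  omega

end Glue

theorem G1_connected (c : Fin 3) : (G1 c).Connected := by
  rw [connected_iff]
  intro f _ hc
  have hall : ∀ v, f v = f ((0 : Fin 1), 0) := by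
    rintro ⟨u, k⟩
    have := apply_eq_of_two_colors (G1 c) (show (0 : Fin 3) ≠ 1 by decide) (hc 0) (hc 1) (u, k)
    rw [this, Subsingleton.elim (α := Fin 1) u 0]
  intro u v
  rw [hall u, hall v]

theorem G2_connected : G2.Connected := by
  rw [connected_iff]
  intro f hp hc
  have hall : ∀ v, f v = f ((0 : Fin 2), 0) := by
    rintro ⟨u, k⟩
    rw [apply_eq_of_two_colors G2 (show (0 : Fin 3) ≠ 1 by decide) (hc 0) (hc 1) (u, k)]
    have h : ∀ u : Fin 2, u = 0 ∨ u = 1 := by decide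
    rcases h u with rfl | rfl
    · rfl
    · exact hp ((0 : Fin 2), 0)
  intro u v
  rw [hall u, hall v]

theorem two_le_numFaces_of_pairing (G : TGraph) (c : Fin 3) (u : G.B)
    (h : ∀ v : G.V, (G.pairing v).2 = v.2 ∨ (G.pairing v).2 = bubblePerm c v.2) :
    2 ≤ G.numFaces c := by
  have hg : ∀ c : Fin 3, ∃ g : Fin 4 → ZMod 2, (∀ k, g (bubblePerm c k) = g k) ∧
      ∃ k, g 0 ≠ g k := by
    intro c
    refine ⟨fun k => if k = 0 ∨ k = bubblePerm c 0 then 1 else 0, ?_⟩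
    revert c
    decide
  obtain ⟨g, hg, k, hk⟩ := hg c
  refine two_le_card_orbits (f := fun v : G.V => g v.2) (u := (u, 0)) (v := (u, k)) ?_ hk
  rintro σ (rfl | rfl) v
  · change g (G.pairing v).2 = g v.2
    rcases h v with h | h <;> rw [h]
    exact hg _
  · exact hg v.2

theorem four_le_F_G1 (c : Fin 3) : 4 ≤ (G1 c).F := by
  have hone : ∀ d, 1 ≤ (G1 c).numFaces d := fun d =>
    have : Nonempty (G1 c).V := ⟨((0 : Fin 1), 0)⟩
    one_le_card_orbits _
  have htwo := two_le_numFaces_of_pairing (G1 c) c (0 : Fin 1) fun v => Or.inr rfl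
  have h0 := hone 0
  have h1 := hone 1
  have h2 := hone 2
  rw [F, Fin.sum_univ_three]
  fin_cases c <;> simp only [Fin.zero_eta, Fin.mk_one, Fin.reduceFinMk] at * <;> omega

theorem six_le_F_G2 : 6 ≤ G2.F := by
  have h := fun c => two_le_numFaces_of_pairing G2 c (0 : Fin 2) fun v => Or.inl rfl
  have h0 := h 0
  have h1 := h 1
  have h2 := h 2
  rw [F, Fin.sum_univ_three]
  omega

/-- Iterated melonic insertions on a connected graph produce three faces for every two
bubbles. -/
theorem exists_connected_add_bubbles (G : TGraph) (hG : G.Connected) (v : G.V) (m : ℕ) :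
    ∃ H : TGraph, H.Connected ∧ H.b = G.b + 2 * m ∧ G.F + 3 * m ≤ H.F := by
  suffices ∃ H : TGraph, Nonempty H.V ∧ H.Connected ∧ H.b = G.b + 2 * m ∧ G.F + 3 * m ≤ H.F by
    obtain ⟨H, _, h⟩ := this
    exact ⟨H, h⟩
  induction m with
  | zero => exact ⟨G, ⟨v⟩, hG, by simp⟩
  | succ m ih =>
    obtain ⟨H, ⟨w⟩, hH, hb, hF⟩ := ih
    refine ⟨H.insertDipole w, ⟨inlV H G2 w⟩, glue_connected _ _ _ _ hH G2_connected, ?_, ?_⟩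
    · have h2 : G2.b = 2 := rfl
      rw [insertDipole, glue_b, hb, h2]
      ring
    · have h1 := glue_F H G2 w ((0 : Fin 2), (0 : Fin 4))
      have h2 := six_le_F_G2
      rw [insertDipole]
      omega

theorem MaximizesFaces.two_mul_F_of_odd {G : TGraph} (hG : G.MaximizesFaces) (hodd : Odd G.b) :
    2 * G.F = 3 * G.b + 5 := by
  obtain ⟨m, hm⟩ := hodd
  obtain ⟨H, hH, hb, hF⟩ :=
    exists_connected_add_bubbles (G1 0) (G1_connected 0) ((0 : Fin 1), 0) m
  have h1 : (G1 0).b = 1 := rfl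
  have h2 := hG.2 H hH (by omega)
  have h3 := four_le_F_G1 0
  have h4 := two_mul_F_le hG.1
  omega

end TGraph

/-- If a connected graph with even bubble number decomposes
along a color-0 2-edge-cut into two parts `H` and `K`, each with an odd number
of bubbles and each face-maximizing for its bubble number, then the glued
graph `G` has `F(G) = (3/2) b + 2 < (3/2) b + 3`, hence does not maximize the
number of faces among graphs with `b` bubbles. -/
theorem odd_odd_cut_not_maximal (H K : TGraph) (p : H.V) (q : K.V)
    (hH : H.MaximizesFaces) (hK : K.MaximizesFaces)
    (hoddH : Odd H.b) (hoddK : Odd K.b) :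
    ((glue H K p q).F : ℚ) = 3 / 2 * (glue H K p q).b + 2 ∧
      (3 : ℚ) / 2 * (glue H K p q).b + 2 < 3 / 2 * (glue H K p q).b + 3 ∧
      ¬ (glue H K p q).MaximizesFaces := by
  have hFH := hH.two_mul_F_of_odd hoddH
  have hFK := hK.two_mul_F_of_odd hoddK
  have hF := glue_F H K p q
  have hb := glue_b H K p q
  have hF2 : 2 * (glue H K p q).F = 3 * (glue H K p q).b + 4 := by omega
  refine ⟨?_, by linarith, fun hmax => ?_⟩
  · have h : (2 : ℚ) * (glue H K p q).F = 3 * (glue H K p q).b + 4 := by exact_mod_cast hF2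
    linarith
  · obtain ⟨m, hm⟩ := hoddH
    obtain ⟨n, hn⟩ := hoddK
    obtain ⟨G, hG, hGb, hGF⟩ :=
      exists_connected_add_bubbles G2 G2_connected ((0 : Fin 2), 0) (m + n)
    have h2 : G2.b = 2 := rfl
    have h3 := six_le_F_G2
    have h4 := hmax.2 G hG (by omega)
    omega
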